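/- arXiv:1509.05878 — 3 statements merged into one kernel-verified Lean document; each statement's English description precedes it below -/
import Mathlib

section
/- Let M ∈ ℕ₀ and 0 ≤ κ < 1, and let P be a point set in [0,1)² with N = 2^{M+κ} points. Suppose j = (j₁,j₂) ∈ ℕ₀² with |j| = M and m ∈ 𝔻_j are such that I_{j,m} contains exactly one point p of P. Let j' = (j₁+1,j₂) and j'' = (j₁,j₂+1), and let m' ∈ 𝔻_{j'} and m'' ∈ 𝔻_{j''} be the unique indices with p ∈ I_{j',m'} ⊂ I_{j,m} and p ∈ I_{j'',m''} ⊂ I_{j,m}. Then ρ_{j,m} := μ_{j,m}² + μ_{j',m'}² + μ_{j'',m''}² satisfies 2^{2M}·ρ_{j,m} ≥ γ(κ). -/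
open MeasureTheory

noncomputable section

/-- The half-open unit square `[0,1) × [0,1)` in `ℝ × ℝ`. -/
def unitSq : Set (ℝ × ℝ) := Set.Ico (0:ℝ) 1 ×ˢ Set.Ico (0:ℝ) 1

/-- The discrepancy function of the point configuration `p`. -/
def disc (N : ℕ) (p : Fin N → ℝ × ℝ) (x : ℝ × ℝ) : ℝ :=
  (∑ i : Fin N, if 0 ≤ (p i).1 ∧ (p i).1 < x.1 ∧ 0 ≤ (p i).2 ∧ (p i).2 < x.2
    then (1:ℝ) else 0) - N * x.1 * x.2

/-- The dyadic interval `I_{j,m}`. -/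
def dyadic (j m : ℕ × ℕ) : Set (ℝ × ℝ) :=
  Set.Ico ((m.1:ℝ)/2^j.1) (((m.1:ℝ)+1)/2^j.1) ×ˢ
    Set.Ico ((m.2:ℝ)/2^j.2) (((m.2:ℝ)+1)/2^j.2)

/-- The one-dimensional Haar function adapted to `[m/2^j, (m+1)/2^j)`. -/
def haar1 (j m : ℕ) (t : ℝ) : ℝ :=
  if (m:ℝ)/2^j ≤ t ∧ t < (2*(m:ℝ)+1)/2^(j+1) then 1
  else if (2*(m:ℝ)+1)/2^(j+1) ≤ t ∧ t < ((m:ℝ)+1)/2^j then -1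
  else 0

/-- The two-dimensional Haar function `h_{j,m}`. -/
def haar (j m : ℕ × ℕ) (x : ℝ × ℝ) : ℝ := haar1 j.1 m.1 x.1 * haar1 j.2 m.2 x.2

/-- `g_κ(α,β) = (αβ − 2^{κ-2})² + (α(1−β) − 2^{κ-4})² + ((1−α)β − 2^{κ-4})²`. -/
def gk (κ α β : ℝ) : ℝ :=
  (α * β - (2:ℝ) ^ (κ - 2)) ^ 2 + (α * (1 - β) - (2:ℝ) ^ (κ - 4)) ^ 2 +
    ((1 - α) * β - (2:ℝ) ^ (κ - 4)) ^ 2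

/-- `h(κ) = inf { g_κ(α,β) : 1/2 ≤ α < 1, 1/2 ≤ β < 1 }`. -/
def hfun (κ : ℝ) : ℝ :=
  sInf { t : ℝ | ∃ α β : ℝ, 1/2 ≤ α ∧ α < 1 ∧ 1/2 ≤ β ∧ β < 1 ∧ t = gk κ α β }

/-- `γ(κ) = min(9·2^{2κ-13}, 2^{-4}·h(κ))`. -/
def gam (κ : ℝ) : ℝ := min (9 * (2:ℝ) ^ (2 * κ - 13)) ((2:ℝ) ^ (-4 : ℝ) * hfun κ)

/-- The tent function attached to the dyadic interval. -/
def tent (j m : ℕ) (t : ℝ) : ℝ := min (t - (m:ℝ)/2^j) (((m:ℝ)+1)/2^j - t)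

lemma haar1_eq (j m : ℕ) (t : ℝ) : haar1 j m t =
    (Set.Ico ((m:ℝ)/2^j) ((2*(m:ℝ)+1)/2^(j+1))).indicator (fun _ => (1:ℝ)) t -
    (Set.Ico ((2*(m:ℝ)+1)/2^(j+1)) (((m:ℝ)+1)/2^j)).indicator (fun _ => (1:ℝ)) t := by
  unfold haar1
  simp only [Set.indicator, Set.mem_Ico]
  by_cases h1 : (m:ℝ)/2^j ≤ t ∧ t < (2*(m:ℝ)+1)/2^(j+1)
  · have h2 : ¬ ((2*(m:ℝ)+1)/2^(j+1) ≤ t ∧ t < ((m:ℝ)+1)/2^j) := by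
      intro h; linarith [h.1, h1.2]
    simp [h1, h2]
  · by_cases h2 : ((2*(m:ℝ)+1)/2^(j+1) ≤ t ∧ t < ((m:ℝ)+1)/2^j)
    · simp [h1, h2]
    · simp [h1, h2]

lemma pts (j m : ℕ) (hm : m < 2^j) : ∃ a h : ℝ, 0 ≤ a ∧ 0 < h ∧ a + 2*h ≤ 1 ∧
    (m:ℝ)/2^j = a ∧ (2*(m:ℝ)+1)/2^(j+1) = a + h ∧ ((m:ℝ)+1)/2^j = a + 2*h ∧
    h = 1/2^(j+1) := by
  refine ⟨(m:ℝ)/2^j, 1/2^(j+1), by positivity, by positivity, ?_, rfl, ?_, ?_, rfl⟩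
  · have : ((m:ℝ)+1) ≤ 2^j := by exact_mod_cast hm
    have h2 : (m:ℝ)/2^j + 2*(1/2^(j+1)) = ((m:ℝ)+1)/2^j := by
      rw [pow_succ]; field_simp
    rw [h2, div_le_one (by positivity)]; exact this
  · rw [pow_succ]; field_simp
  · rw [pow_succ]; field_simp

lemma meas_haar1 (j m : ℕ) : Measurable (haar1 j m) := by
  have : haar1 j m = fun t => _ := funext (haar1_eq j m)
  rw [this]
  exact (measurable_const.indicator measurableSet_Ico).sub
    (measurable_const.indicator measurableSet_Ico)

lemma abs_haar1_le (j m : ℕ) (t : ℝ) : |haar1 j m t| ≤ 1 := by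
  unfold haar1; split_ifs <;> simp

/-- The one-dimensional step function. -/
def stp (p t : ℝ) : ℝ := if p < t then 1 else 0

lemma meas_stp (p : ℝ) : Measurable (stp p) :=
  Measurable.ite measurableSet_Ioi measurable_const measurable_const

lemma intg_of_bdd (f : ℝ → ℝ) (hf : Measurable f) (hb : ∀ t ∈ Set.Ico (0:ℝ) 1, |f t| ≤ 1) :
    IntegrableOn f (Set.Ico (0:ℝ) 1) := by
  refine IntegrableOn.of_bound (by simp) hf.aestronglyMeasurable 1 ?_
  rw [ae_restrict_iff' measurableSet_Ico]
  exact Filter.Eventually.of_forall (fun t ht => by simpa using hb t ht)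

lemma intg_step (j m : ℕ) (p : ℝ) :
    IntegrableOn (fun t => stp p t * haar1 j m t) (Set.Ico (0:ℝ) 1) := by
  refine intg_of_bdd _ ((meas_stp p).mul (meas_haar1 j m)) (fun t _ => ?_)
  have := abs_haar1_le j m t
  unfold stp
  split_ifs <;> simp [this]

lemma intg_id (j m : ℕ) :
    IntegrableOn (fun t => t * haar1 j m t) (Set.Ico (0:ℝ) 1) := by
  refine intg_of_bdd _ (measurable_id.mul (meas_haar1 j m)) (fun t ht => ?_)
  have := abs_haar1_le j m t
  rw [abs_mul, abs_of_nonneg ht.1]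
  exact mul_le_one₀ ht.2.le (abs_nonneg _) this

lemma int_ind (f : ℝ → ℝ) (a c : ℝ) (h0 : 0 ≤ a) (h1 : c ≤ 1) :
    ∫ t in Set.Ico (0:ℝ) 1, (Set.Ico a c).indicator f t = ∫ t in Set.Ico a c, f t := by
  rw [setIntegral_indicator measurableSet_Ico]
  congr 2
  exact Set.inter_eq_right.2 (Set.Ico_subset_Ico h0 h1)

lemma int_stp (p a c : ℝ) :
    ∫ t in Set.Ico a c, stp p t = max (c - max a p) 0 := by
  have : stp p = (Set.Ioi p).indicator (fun _ => (1:ℝ)) := by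
    ext t; simp [stp, Set.indicator]
  rw [this, setIntegral_indicator measurableSet_Ioi, setIntegral_const, smul_eq_mul, mul_one]
  have h2 : (Set.Ico a c ∩ Set.Ioi p : Set ℝ) =ᵐ[volume] (Set.Ico (max a p) c : Set ℝ) := by
    have h3 : (Set.Ico (max a p) c : Set ℝ) = Set.Ico a c ∩ Set.Ici p := by
      ext t; simp only [Set.mem_inter_iff, Set.mem_Ico, Set.mem_Ici, max_le_iff]; tauto
    rw [h3]
    exact (ae_eq_refl _).inter Ioi_ae_eq_Ici
  rw [measureReal_congr h2, Real.volume_real_Ico]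

lemma int_idd (a c : ℝ) (h : a ≤ c) :
    ∫ t in Set.Ico a c, t = (c^2 - a^2)/2 := by
  rw [integral_Ico_eq_integral_Ioc, ← intervalIntegral.integral_of_le h, integral_id]

lemma int_split (j m : ℕ) (hm : m < 2^j) (f : ℝ → ℝ) (hf : IntegrableOn f (Set.Ico (0:ℝ) 1)) :
    ∫ t in Set.Ico (0:ℝ) 1, f t * haar1 j m t =
    (∫ t in Set.Ico ((m:ℝ)/2^j) ((2*(m:ℝ)+1)/2^(j+1)), f t) -
    (∫ t in Set.Ico ((2*(m:ℝ)+1)/2^(j+1)) (((m:ℝ)+1)/2^j), f t) := by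
  obtain ⟨a, h, ha, hh, hah, e1, e2, e3, -⟩ := pts j m hm
  simp_rw [haar1_eq, e1, e2, e3]
  rw [← int_ind f a (a+h) ha (by linarith), ← int_ind f (a+h) (a+2*h) (by linarith) (by linarith),
    ← integral_sub (hf.indicator measurableSet_Ico) (hf.indicator measurableSet_Ico)]
  congr 1
  ext t
  simp only [Set.indicator]
  split_ifs <;> simp

lemma int_step (j m : ℕ) (hm : m < 2^j) (p : ℝ) :
    ∫ t in Set.Ico (0:ℝ) 1, stp p t * haar1 j m t =
      if p ∈ Set.Ico ((m:ℝ)/2^j) (((m:ℝ)+1)/2^j) then - tent j m p else 0 := by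
  have hi : IntegrableOn (stp p) (Set.Ico (0:ℝ) 1) :=
    intg_of_bdd _ (meas_stp p) (fun t _ => by unfold stp; split_ifs <;> simp)
  rw [int_split j m hm _ hi, int_stp, int_stp, tent]
  obtain ⟨a, h, ha, hh, hah, e1, e2, e3, -⟩ := pts j m hm
  rw [e1, e2, e3]
  simp only [Set.mem_Ico]
  split_ifs with hc
  · rw [max_eq_right hc.1]
    rcases le_total p (a+h) with h1 | h1
    · rw [max_eq_left h1, min_eq_left (by linarith), max_eq_left (by linarith),
        max_eq_left (by linarith)]; ring
    · rw [max_eq_right h1, min_eq_right (by linarith), max_eq_right (by linarith),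
        max_eq_left (by linarith [hc.2])]; ring
  · rcases lt_or_ge p a with h1 | h1
    · rw [max_eq_left h1.le, max_eq_left (by linarith : p ≤ a + h), max_eq_left (by linarith),
        max_eq_left (by linarith)]; ring
    · have h2 : a + 2*h ≤ p := by
        by_contra hcon; exact hc ⟨h1, not_le.1 hcon⟩
      rw [max_eq_right h1, max_eq_right (by linarith : a + h ≤ p), max_eq_right (by linarith),
        max_eq_right (by linarith)]; ring

lemma int_lin (j m : ℕ) (hm : m < 2^j) :
    ∫ t in Set.Ico (0:ℝ) 1, t * haar1 j m t = -(1/2^(j+1))^2 := by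
  have hi : IntegrableOn (fun t : ℝ => t) (Set.Ico (0:ℝ) 1) :=
    intg_of_bdd _ measurable_id (fun t ht => by rw [abs_of_nonneg ht.1]; exact ht.2.le)
  rw [int_split j m hm _ hi]
  obtain ⟨a, h, ha, hh, hah, e1, e2, e3, e4⟩ := pts j m hm
  rw [← e4, e1, e2, e3, int_idd _ _ (by linarith), int_idd _ _ (by linarith)]
  ring

lemma intg_prod (f g : ℝ → ℝ) (hf : IntegrableOn f (Set.Ico (0:ℝ) 1))
    (hg : IntegrableOn g (Set.Ico (0:ℝ) 1)) :
    IntegrableOn (fun x : ℝ × ℝ => f x.1 * g x.2) unitSq := by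
  unfold IntegrableOn unitSq
  rw [Measure.volume_eq_prod, ← Measure.prod_restrict]
  exact Integrable.mul_prod hf hg

lemma int_prod (f g : ℝ → ℝ) :
    ∫ x in unitSq, f x.1 * g x.2 =
      (∫ t in Set.Ico (0:ℝ) 1, f t) * (∫ t in Set.Ico (0:ℝ) 1, g t) := by
  unfold unitSq
  rw [Measure.volume_eq_prod]
  exact setIntegral_prod_mul f g _ _

lemma mu_eq (N : ℕ) (p : Fin N → ℝ × ℝ) (hp : ∀ i, p i ∈ unitSq)
    (j m : ℕ × ℕ) (hm1 : m.1 < 2 ^ j.1) (hm2 : m.2 < 2 ^ j.2)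
    (i₀ : Fin N) (hi₀ : p i₀ ∈ dyadic j m)
    (huniq : ∀ i, p i ∈ dyadic j m → i = i₀) :
    ∫ x in unitSq, disc N p x * haar j m x =
      tent j.1 m.1 (p i₀).1 * tent j.2 m.2 (p i₀).2
        - N * ((1/2^(j.1+1))^2 * (1/2^(j.2+1))^2) := by
  have key : ∀ x : ℝ × ℝ, disc N p x * haar j m x =
      (∑ i : Fin N, (stp (p i).1 x.1 * haar1 j.1 m.1 x.1) * (stp (p i).2 x.2 * haar1 j.2 m.2 x.2))
      - N * ((x.1 * haar1 j.1 m.1 x.1) * (x.2 * haar1 j.2 m.2 x.2)) := by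
    intro x
    unfold disc haar
    rw [sub_mul, Finset.sum_mul]
    congr 1
    · refine Finset.sum_congr rfl (fun i _ => ?_)
      have h1 : 0 ≤ (p i).1 := (hp i).1.1
      have h2 : 0 ≤ (p i).2 := (hp i).2.1
      unfold stp
      by_cases h3 : (p i).1 < x.1 <;> by_cases h4 : (p i).2 < x.2 <;> simp [h1, h2, h3, h4]
    · ring
  simp_rw [key]
  have hI : ∀ i : Fin N, IntegrableOn (fun x : ℝ × ℝ =>
      (stp (p i).1 x.1 * haar1 j.1 m.1 x.1) * (stp (p i).2 x.2 * haar1 j.2 m.2 x.2)) unitSq :=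
    fun i => intg_prod _ _ (intg_step j.1 m.1 _) (intg_step j.2 m.2 _)
  have hJ : IntegrableOn (fun x : ℝ × ℝ =>
      (x.1 * haar1 j.1 m.1 x.1) * (x.2 * haar1 j.2 m.2 x.2)) unitSq :=
    intg_prod _ _ (intg_id j.1 m.1) (intg_id j.2 m.2)
  rw [integral_sub (integrable_finsetSum _ (fun i _ => hI i)) (hJ.const_mul _),
    integral_finsetSum _ (fun i _ => hI i), integral_const_mul,
    int_prod (fun t => t * haar1 j.1 m.1 t) (fun t => t * haar1 j.2 m.2 t),
    int_lin _ _ hm1, int_lin _ _ hm2]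
  have hS : ∀ i : Fin N, ∫ x in unitSq,
      (stp (p i).1 x.1 * haar1 j.1 m.1 x.1) * (stp (p i).2 x.2 * haar1 j.2 m.2 x.2)
      = if i = i₀ then tent j.1 m.1 (p i₀).1 * tent j.2 m.2 (p i₀).2 else 0 := by
    intro i
    rw [int_prod (fun t => stp (p i).1 t * haar1 j.1 m.1 t) (fun t => stp (p i).2 t * haar1 j.2 m.2 t),
      int_step _ _ hm1, int_step _ _ hm2]
    by_cases h : i = i₀
    · subst h
      rw [if_pos hi₀.1, if_pos hi₀.2, if_pos rfl]; ring
    · rw [if_neg h]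
      by_cases h1 : (p i).1 ∈ Set.Ico ((m.1:ℝ)/2^j.1) (((m.1:ℝ)+1)/2^j.1)
      · by_cases h2 : (p i).2 ∈ Set.Ico ((m.2:ℝ)/2^j.2) (((m.2:ℝ)+1)/2^j.2)
        · exact absurd (huniq i ⟨h1, h2⟩) h
        · rw [if_neg h2]; ring
      · rw [if_neg h1]; ring
  simp_rw [hS]
  rw [Finset.sum_ite_eq' Finset.univ i₀]
  simp

lemma same (j m m' : ℕ) (t : ℝ) (h : t ∈ Set.Ico ((m:ℝ)/2^j) (((m:ℝ)+1)/2^j))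
    (h' : t ∈ Set.Ico ((m':ℝ)/2^j) (((m':ℝ)+1)/2^j)) : m' = m := by
  have hp : (0:ℝ) < 2^j := by positivity
  simp only [Set.mem_Ico, div_le_iff₀ hp, lt_div_iff₀ hp] at h h'
  have h1 : (m:ℝ) < m' + 1 := by linarith
  have h2 : (m':ℝ) < m + 1 := by linarith
  have h1' : m < m' + 1 := by exact_mod_cast h1
  have h2' : m' < m + 1 := by exact_mod_cast h2
  omega

lemma refine1 (j m m' : ℕ) (t : ℝ) (h : t ∈ Set.Ico ((m:ℝ)/2^j) (((m:ℝ)+1)/2^j))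
    (h' : t ∈ Set.Ico ((m':ℝ)/2^(j+1)) (((m':ℝ)+1)/2^(j+1))) :
    (∃ α : ℝ, 0 ≤ α ∧ α ≤ 1 ∧ tent j m t = α * (1/2^(j+1)) ∧
      tent (j+1) m' t = min α (1-α) * (1/2^(j+1))) ∧
    Set.Ico ((m':ℝ)/2^(j+1)) (((m':ℝ)+1)/2^(j+1)) ⊆ Set.Ico ((m:ℝ)/2^j) (((m:ℝ)+1)/2^j) := by
  obtain ⟨d, hd⟩ : ∃ d : ℝ, d = 1/2^(j+1) := ⟨_, rfl⟩
  have hd0 : 0 < d := by rw [hd]; positivity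
  obtain ⟨u, hu⟩ : ∃ u : ℝ, t = u * d := ⟨t / d, by field_simp⟩
  have e1 : (m:ℝ)/2^j = 2*m*d := by rw [hd, pow_succ]; field_simp
  have e2 : ((m:ℝ)+1)/2^j = (2*m+2)*d := by rw [hd, pow_succ]; field_simp
  have e3 : (m':ℝ)/2^(j+1) = m'*d := by rw [hd]; field_simp
  have e4 : ((m':ℝ)+1)/2^(j+1) = (m'+1)*d := by rw [hd]; field_simp
  unfold tent
  rw [← hd, e1, e2, e3, e4]
  rw [e1, e2, hu] at h
  rw [e3, e4, hu] at h'
  have a1 := le_of_mul_le_mul_right h.1 hd0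
  have a2 := lt_of_mul_lt_mul_right h.2 hd0.le
  have a3 := le_of_mul_le_mul_right h'.1 hd0
  have a4 := lt_of_mul_lt_mul_right h'.2 hd0.le
  have b1 : 2*m < m'+1 := by
    have : (2*m:ℝ) < m'+1 := by linarith
    exact_mod_cast this
  have b2 : m' < 2*m+2 := by
    have : (m':ℝ) < 2*m+2 := by linarith
    exact_mod_cast this
  have hm : m' = 2*m ∨ m' = 2*m+1 := by omega
  have fac : ∀ x y : ℝ, min (x*d) (y*d) = min x y * d := fun x y =>
    (min_mul_of_nonneg x y hd0.le).symm
  rw [hu, ← sub_mul, ← sub_mul, ← sub_mul, ← sub_mul, fac, fac]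
  rcases hm with hm | hm
  · subst hm
    push_cast at *
    refine ⟨⟨u - 2*m, by linarith, by linarith, ?_, ?_⟩, ?_⟩
    · rw [min_eq_left (by linarith)]
    · congr 2; ring
    · exact Set.Ico_subset_Ico le_rfl (by nlinarith)
  · subst hm
    push_cast at *
    refine ⟨⟨2*m+2-u, by linarith, by linarith, ?_, ?_⟩, ?_⟩
    · rw [min_eq_right (by linarith)]
    · rw [min_comm]; congr 2 <;> ring
    · exact Set.Ico_subset_Ico (by nlinarith) (by nlinarith)

lemma hfun_le (κ α β : ℝ) (h1 : 1/2 ≤ α) (h2 : α ≤ 1) (h3 : 1/2 ≤ β) (h4 : β ≤ 1) :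
    hfun κ ≤ gk κ α β := by
  have hc : IsClosed {x : ℝ × ℝ | hfun κ ≤ gk κ x.1 x.2} := by
    apply isClosed_le continuous_const
    unfold gk
    fun_prop
  have hs : Set.Ico (1/2:ℝ) 1 ×ˢ Set.Ico (1/2:ℝ) 1 ⊆ {x : ℝ × ℝ | hfun κ ≤ gk κ x.1 x.2} := by
    rintro ⟨a, b⟩ ⟨ha, hb⟩
    have hbd : BddBelow { t : ℝ | ∃ α β : ℝ, 1/2 ≤ α ∧ α < 1 ∧ 1/2 ≤ β ∧ β < 1 ∧
        t = gk κ α β } := by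
      refine ⟨0, ?_⟩
      rintro t ⟨a, b, -, -, -, -, rfl⟩
      unfold gk; positivity
    exact csInf_le hbd ⟨a, b, ha.1, ha.2, hb.1, hb.2, rfl⟩
  have := closure_minimal hs hc
  rw [closure_prod_eq, closure_Ico (by norm_num)] at this
  have hmem : ((α, β) : ℝ × ℝ) ∈ Set.Icc (1/2:ℝ) 1 ×ˢ Set.Icc (1/2:ℝ) 1 :=
    ⟨⟨h1, h2⟩, ⟨h3, h4⟩⟩
  exact this hmem

lemma gam_le (κ α β : ℝ) (h1 : 0 ≤ α) (h2 : α ≤ 1) (h3 : 0 ≤ β) (h4 : β ≤ 1) :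
    gam κ ≤ 1/16 * ((α * β - (2:ℝ) ^ (κ - 2)) ^ 2 + (min α (1-α) * β - (2:ℝ) ^ (κ - 4)) ^ 2 +
    (α * min β (1-β) - (2:ℝ) ^ (κ - 4)) ^ 2) := by
  have e2 : (2:ℝ)^(κ-2) = 4 * (2:ℝ)^(κ-4) := by
    rw [show κ - 2 = (κ - 4) + 2 by ring, Real.rpow_add (by norm_num)]; norm_num; ring
  have e3 : 9 * (2:ℝ)^(2*κ-13) = 1/16 * (9/2 * ((2:ℝ)^(κ-4))^2) := by
    rw [show 2*κ-13 = (κ-4) + (κ-4) + (-5:ℝ) by ring, Real.rpow_add (by norm_num),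
      Real.rpow_add (by norm_num), Real.rpow_neg (by norm_num)]; norm_num; ring
  have e4 : (2:ℝ)^(-4:ℝ) = 1/16 := by
    rw [Real.rpow_neg (by norm_num)]; norm_num
  rcases le_total (1/2) α with ha | ha
  · rcases le_total (1/2) β with hb | hb
    · refine (min_le_right _ _).trans ?_
      rw [e4]
      refine mul_le_mul_of_nonneg_left ((hfun_le κ α β ha h2 hb h4).trans ?_) (by norm_num)
      rw [min_eq_right (by linarith), min_eq_right (by linarith)]
      unfold gk; linarith
    · refine (min_le_left _ _).trans ?_
      rw [e3, e2, min_eq_left (by linarith : β ≤ 1 - β)]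
      generalize (2:ℝ)^(κ-4) = c
      nlinarith [sq_nonneg (2 * (α*β) - 5*c), sq_nonneg (min α (1-α) * β - c)]
  · refine (min_le_left _ _).trans ?_
    rw [e3, e2, min_eq_left (by linarith : α ≤ 1 - α)]
    generalize (2:ℝ)^(κ-4) = c
    nlinarith [sq_nonneg (2 * (α*β) - 5*c), sq_nonneg (α * min β (1-β) - c)]

/-- If `N = 2^{M+κ}`, `|j| = M`, and `I_{j,m}` contains exactly one point `p i₀` of `P`,
and `I_{j',m'}, I_{j'',m''}` (with `j' = (j₁+1,j₂)`, `j'' = (j₁,j₂+1)`) are the dyadic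
subintervals of `I_{j,m}` containing the same point, then
`2^{2M}·(μ_{j,m}² + μ_{j',m'}² + μ_{j'',m''}²) ≥ γ(κ)`. -/
theorem rho_lower_bound_levelM (M : ℕ) (κ : ℝ) (hκ0 : 0 ≤ κ) (hκ1 : κ < 1)
    (N : ℕ) (p : Fin N → ℝ × ℝ) (hp : ∀ i, p i ∈ unitSq)
    (hN : (N : ℝ) = 2 ^ ((M : ℝ) + κ))
    (j : ℕ × ℕ) (hj : j.1 + j.2 = M)
    (m : ℕ × ℕ) (hm1 : m.1 < 2 ^ j.1) (hm2 : m.2 < 2 ^ j.2)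
    (i₀ : Fin N) (hi₀ : p i₀ ∈ dyadic j m)
    (huniq : ∀ i, p i ∈ dyadic j m → i = i₀)
    (m' : ℕ × ℕ) (hm'1 : m'.1 < 2 ^ (j.1 + 1)) (hm'2 : m'.2 < 2 ^ j.2)
    (hpm' : p i₀ ∈ dyadic (j.1 + 1, j.2) m')
    (m'' : ℕ × ℕ) (hm''1 : m''.1 < 2 ^ j.1) (hm''2 : m''.2 < 2 ^ (j.2 + 1))
    (hpm'' : p i₀ ∈ dyadic (j.1, j.2 + 1) m'') :
    gam κ ≤ (2:ℝ) ^ (2 * M) *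
      ((∫ x in unitSq, disc N p x * haar j m x) ^ 2 +
       (∫ x in unitSq, disc N p x * haar (j.1 + 1, j.2) m' x) ^ 2 +
       (∫ x in unitSq, disc N p x * haar (j.1, j.2 + 1) m'' x) ^ 2) := by
  obtain ⟨m1, m2⟩ := m
  obtain ⟨a1, a2⟩ := m'
  obtain ⟨b1, b2⟩ := m''
  obtain ⟨j1, j2⟩ := j
  simp only at *
  obtain rfl : a2 = m2 := same j2 _ _ _ hi₀.2 hpm'.2
  obtain rfl : b1 = m1 := same j1 _ _ _ hi₀.1 hpm''.1
  obtain ⟨⟨α, hα0, hα1, tα, tα'⟩, sub1⟩ := refine1 j1 _ _ _ hi₀.1 hpm'.1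
  obtain ⟨⟨β, hβ0, hβ1, tβ, tβ'⟩, sub2⟩ := refine1 j2 _ _ _ hi₀.2 hpm''.2
  rw [mu_eq N p hp _ _ hm1 hm2 i₀ hi₀ huniq,
    mu_eq N p hp (j1+1, j2) _ hm'1 hm'2 i₀ hpm' (fun i hi => huniq i ⟨sub1 hi.1, hi.2⟩),
    mu_eq N p hp (j1, j2+1) _ hm''1 hm''2 i₀ hpm'' (fun i hi => huniq i ⟨hi.1, sub2 hi.2⟩)]
  simp only at *
  rw [tα, tα', tβ, tβ']
  refine (gam_le κ α β hα0 hα1 hβ0 hβ1).trans (le_of_eq ?_)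
  have e2 : (2:ℝ)^(κ-2) = (2:ℝ)^κ / 4 := by
    rw [Real.rpow_sub (by norm_num)]; norm_num
  have e4 : (2:ℝ)^(κ-4) = (2:ℝ)^κ / 16 := by
    rw [Real.rpow_sub (by norm_num)]; norm_num
  rw [hN, Real.rpow_add (by norm_num), Real.rpow_natCast, e2, e4, ← hj]
  generalize (2:ℝ)^κ = c
  generalize min α (1-α) = α'
  generalize min β (1-β) = β'
  simp only [pow_succ, pow_add, pow_mul', pow_zero, one_mul]
  have hA : (2:ℝ)^j1 ≠ 0 := by positivity
  have hB : (2:ℝ)^j2 ≠ 0 := by positivity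
  generalize (2:ℝ)^j1 = A at *
  generalize (2:ℝ)^j2 = B at *
  field_simp
  ring

end
end

section
/- Let M ∈ ℕ₀ and 0 ≤ κ < 1, and let (a_r(M))_{r∈ℕ₀} be nonnegative integers satisfying Σ_{r≥0} a_r(M) = (M+1)·2^M and Σ_{r≥0} r·a_r(M) = (M+1)·2^{M+κ}. Then a₀(M)·2^{2κ-8} + a₁(M)·(γ(κ) − 2^{-1}·γ(κ−1)) ≥ (M+1)·2^M·(2−2^κ)·(γ(κ) − 2^{-1}·γ(κ−1)). -/
noncomputable section

set_option maxHeartbeats 2000000 in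
lemma key_poly (c α β : ℝ) (hc1 : 1 ≤ c) (hc2 : c ≤ 2) (ha : 1/2 ≤ α) (ha1 : α < 1)
    (hb : 1/2 ≤ β) (hb1 : β < 1) :
    9 * c^2 / 4096 ≤ (α * β - c/4)^2 + (α * (1 - β) - c/16)^2 + ((1 - α) * β - c/16)^2 := by
  obtain ⟨s, hs0, hs⟩ : ∃ s : ℝ, 0 ≤ s ∧ s^2 = α * β :=
    ⟨√(α * β), Real.sqrt_nonneg _, Real.sq_sqrt (by positivity)⟩
  have hx4 : 1/4 ≤ α * β := by nlinarith
  have hs2 : 1/2 ≤ s := by nlinarith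
  obtain ⟨d, hd⟩ : ∃ d : ℝ, d = (α + β) / 2 - α * β := ⟨_, rfl⟩
  have hm : s ≤ (α + β) / 2 := by
    apply (pow_le_pow_iff_left₀ hs0 (by linarith) two_ne_zero).1
    nlinarith [sq_nonneg (α - β)]
  have hds : s - s^2 ≤ d := by rw [hs, hd]; linarith
  have hF : (s^2 - c/4)^2 + 2 * (d - c/16)^2 ≤
      (α * β - c/4)^2 + (α * (1 - β) - c/16)^2 + ((1 - α) * β - c/16)^2 := by
    rw [hs, hd]
    nlinarith [sq_nonneg (α - β)]
  refine le_trans ?_ hF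
  by_cases h1 : 19 * c / 64 ≤ s^2
  · have : (3 * c / 64)^2 ≤ (s^2 - c/4)^2 := pow_le_pow_left₀ (by linarith) (by linarith) 2
    nlinarith [sq_nonneg (d - c/16)]
  push Not at h1
  have hs3 : s ≤ 0.771 := by nlinarith
  by_cases h2 : 0.0957 * c ≤ d
  · have : (0.0332 * c)^2 ≤ (d - c/16)^2 := pow_le_pow_left₀ (by linarith) (by linarith) 2
    nlinarith [sq_nonneg (s^2 - c/4)]
  push Not at h2
  have hs4 : 0.742 ≤ s := by nlinarith
  have hxx : 0.55 ≤ s^2 := by nlinarith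
  have e1 : (c/2 * (s^2 - 1/2))^2 ≤ (s^2 - c/4)^2 :=
    pow_le_pow_left₀ (mul_nonneg (by linarith) (by linarith))
      (by linarith [mul_le_mul_of_nonneg_right hc2 (sq_nonneg s)]) 2
  have hd1 : 0.176 + 0.45 * (0.771 - s) ≤ d := by
    have := mul_nonneg (sub_nonneg.2 hs3) (sub_nonneg.2 hs4)
    linarith
  have e2 : (c/2 * (0.051 + 0.45 * (0.771 - s)))^2 ≤ (d - c/16)^2 :=
    by
    have hd0 : 0 ≤ d := by linarith
    have h5 := mul_le_mul_of_nonneg_right hc2 hd0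
    have h6 := mul_le_mul_of_nonneg_left hd1 (by linarith : 0 ≤ c)
    exact pow_le_pow_left₀ (mul_nonneg (by linarith) (by linarith)) (by linarith) 2
  have hx3 : 0.55 + 1.484 * (s - 0.742) ≤ s^2 - 0 := by linarith [sq_nonneg (s - 0.742)]
  have e3 : (0.05 + 1.484 * (s - 0.742))^2 ≤ (s^2 - 1/2)^2 :=
    pow_le_pow_left₀ (by linarith) (by linarith) 2
  have e4 : 9/1024 ≤ (s^2 - 1/2)^2 + 2 * (0.051 + 0.45 * (0.771 - s))^2 := by
    have h7 : 0 ≤ s - 0.742 := by linarith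
    clear e1 e2 hF hds hm hd hs hx3 hd1
    linarith [mul_nonneg h7 h7]
  have h8 := mul_le_mul_of_nonneg_left e4 (sq_nonneg (c/2))
  rw [mul_pow] at e1 e2
  linarith

lemma hfun_nonneg' (κ : ℝ) : 0 ≤ hfun κ := by
  apply Real.sInf_nonneg
  rintro t ⟨α, β, -, -, -, -, rfl⟩
  unfold gk; positivity

lemma hfun_lower (κ : ℝ) (h0 : 0 ≤ κ) (h1 : κ < 1) : 9 * ((2:ℝ)^κ)^2 / 4096 ≤ hfun κ := by
  apply le_csInf
  · exact ⟨_, 1/2, 1/2, by norm_num, by norm_num, by norm_num, by norm_num, rfl⟩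
  rintro t ⟨α, β, ha, ha1, hb, hb1, rfl⟩
  have c1 : (1:ℝ) ≤ 2^κ := Real.one_le_rpow (by norm_num) h0
  have c2 : (2:ℝ)^κ ≤ 2 := by
    simpa using Real.rpow_le_rpow_of_exponent_le (x := (2:ℝ)) (by norm_num) h1.le
  have e2 : (2:ℝ)^(κ-2) = 2^κ/4 := by
    rw [Real.rpow_sub (by norm_num)]; norm_num
  have e4 : (2:ℝ)^(κ-4) = 2^κ/16 := by
    rw [Real.rpow_sub (by norm_num)]; norm_num
  unfold gk
  rw [e2, e4]
  exact key_poly _ α β c1 c2 ha ha1 hb hb1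

/-- If the nonnegative integers `a_r(M)` satisfy `Σ_r a_r(M) = (M+1)·2^M` and
`Σ_r r·a_r(M) = (M+1)·2^{M+κ}`, then
`a₀(M)·2^{2κ-8} + a₁(M)·(γ(κ) − 2^{-1}γ(κ−1)) ≥ (M+1)·2^M·(2−2^κ)·(γ(κ) − 2^{-1}γ(κ−1))`. -/
theorem even_distribution_levelM (M : ℕ) (κ : ℝ) (hκ0 : 0 ≤ κ) (hκ1 : κ < 1)
    (a : ℕ → ℕ)
    (hsum : HasSum (fun r : ℕ => (a r : ℝ)) (((M : ℝ) + 1) * 2 ^ M))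
    (hsum' : HasSum (fun r : ℕ => (r : ℝ) * (a r : ℝ)) (((M : ℝ) + 1) * 2 ^ ((M : ℝ) + κ))) :
    ((M : ℝ) + 1) * 2 ^ M * (2 - (2:ℝ) ^ κ) * (gam κ - (2:ℝ)⁻¹ * gam (κ - 1)) ≤
      (a 0 : ℝ) * (2:ℝ) ^ (2 * κ - 8) + (a 1 : ℝ) * (gam κ - (2:ℝ)⁻¹ * gam (κ - 1)) := by
  have c1 : (1:ℝ) ≤ 2^κ := Real.one_le_rpow (by norm_num) hκ0
  have esq : (2:ℝ)^(2*κ) = (2^κ)^2 := by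
    rw [mul_comm, Real.rpow_mul (by norm_num)]; norm_num
  have e13 : (2:ℝ)^(2*κ-13) = (2^κ)^2/8192 := by
    rw [Real.rpow_sub (by norm_num), esq]; norm_num
  have e8 : (2:ℝ)^(2*κ-8) = (2^κ)^2/256 := by
    rw [Real.rpow_sub (by norm_num), esq]; norm_num
  have e15 : (2:ℝ)^(2*(κ-1)-13) = (2^κ)^2/32768 := by
    rw [show 2*(κ-1)-13 = 2*κ-15 by ring, Real.rpow_sub (by norm_num), esq]; norm_num
  have em4 : (2:ℝ)^(-4:ℝ) = 1/16 := by
    rw [Real.rpow_neg (by norm_num)]; norm_num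
  have hh := hfun_lower κ hκ0 hκ1
  have hp : 0 ≤ gam (κ-1) := by
    unfold gam
    have := hfun_nonneg' (κ-1)
    apply le_min <;> positivity
  have hu : gam (κ-1) ≤ 9 * ((2^κ)^2/32768) := by
    rw [← e15]; exact min_le_left _ _
  have hu0 : gam κ ≤ 9 * ((2^κ)^2/8192) := by
    rw [← e13]; exact min_le_left _ _
  have hl : 9 * ((2:ℝ)^κ)^2/65536 ≤ gam κ := by
    unfold gam
    rw [e13, em4]
    apply le_min <;> nlinarith
  have hD : 0 ≤ gam κ - (2:ℝ)⁻¹ * gam (κ - 1) := by linarith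
  have hD2 : 2 * (gam κ - (2:ℝ)⁻¹ * gam (κ - 1)) ≤ (2:ℝ)^(2*κ-8) := by
    rw [e8]; nlinarith
  have hS := (hsum.mul_left 2).sub hsum'
  have hle : ((M : ℝ) + 1) * 2 ^ M * (2 - (2:ℝ) ^ κ) ≤ 2 * (a 0 : ℝ) + a 1 := by
    have hfin : HasSum (fun r : ℕ => if r ∈ Finset.range 2 then (2 * (a r : ℝ) - r * a r) else 0)
        (∑ r ∈ Finset.range 2, (2 * (a r : ℝ) - r * a r)) := by
      have := hasSum_sum_of_ne_finset_zero (L := .unconditional ℕ) (s := Finset.range 2)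
        (f := fun r : ℕ => if r ∈ Finset.range 2 then (2 * (a r : ℝ) - r * a r) else 0)
        (fun b hb => if_neg hb)
      convert this using 1
      exact Finset.sum_congr rfl fun r hr => (if_pos hr).symm
    have hterm : ∀ r : ℕ, 2 * (a r : ℝ) - r * a r ≤
        if r ∈ Finset.range 2 then (2 * (a r : ℝ) - r * a r) else 0 := by
      intro r
      split_ifs with h
      · exact le_rfl
      · have : (2:ℝ) ≤ r := by
          simp at h; exact_mod_cast h
        nlinarith [Nat.cast_nonneg (α := ℝ) (a r)]
    have := hasSum_le hterm hS hfin
    · rw [Real.rpow_add (by norm_num), Real.rpow_natCast] at this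
      simp [Finset.sum_range_succ] at this
      linarith
  calc _ ≤ (2 * (a 0 : ℝ) + a 1) * (gam κ - (2:ℝ)⁻¹ * gam (κ - 1)) :=
        mul_le_mul_of_nonneg_right hle hD
    _ ≤ _ := by
        have := mul_le_mul_of_nonneg_left hD2 (Nat.cast_nonneg (α := ℝ) (a 0))
        linarith

end
end

section
/- Let M ∈ ℕ₀ and 0 ≤ κ < 1, and let (a_r(M+1))_{r∈ℕ₀} be nonnegative integers satisfying Σ_{r≥0} a_r(M+1) = (M+2)·2^{M+1} and Σ_{r≥0} r·a_r(M+1) = (M+2)·2^{M+κ}. Then a₀(M+1)·2^{2κ-11} + a₁(M+1)·2^{-1}·γ(κ−1) ≥ (M+2)·2^M·((2−2^κ)·2^{2κ-11} + 2^κ·2^{-1}·γ(κ−1)). -/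
noncomputable section

/-- If the nonnegative integers `a_r(M+1)` satisfy `Σ_r a_r(M+1) = (M+2)·2^{M+1}` and
`Σ_r r·a_r(M+1) = (M+2)·2^{M+κ}`, then
`a₀(M+1)·2^{2κ-11} + a₁(M+1)·2^{-1}γ(κ−1) ≥ (M+2)·2^M·((2−2^κ)·2^{2κ-11} + 2^κ·2^{-1}γ(κ−1))`. -/
theorem even_distribution_levelM1 (M : ℕ) (κ : ℝ) (hκ0 : 0 ≤ κ) (hκ1 : κ < 1)
    (a : ℕ → ℕ)
    (hsum : HasSum (fun r : ℕ => (a r : ℝ)) (((M : ℝ) + 2) * 2 ^ (M + 1)))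
    (hsum' : HasSum (fun r : ℕ => (r : ℝ) * (a r : ℝ)) (((M : ℝ) + 2) * 2 ^ ((M : ℝ) + κ))) :
    ((M : ℝ) + 2) * 2 ^ M *
        ((2 - (2:ℝ) ^ κ) * (2:ℝ) ^ (2 * κ - 11) + (2:ℝ) ^ κ * ((2:ℝ)⁻¹ * gam (κ - 1))) ≤
      (a 0 : ℝ) * (2:ℝ) ^ (2 * κ - 11) + (a 1 : ℝ) * ((2:ℝ)⁻¹ * gam (κ - 1)) := by
  have hG0 : 0 ≤ gam (κ - 1) := by
    unfold gam
    apply le_min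
    · positivity
    · apply mul_nonneg (by positivity)
      unfold hfun
      apply Real.sInf_nonneg
      rintro t ⟨α, β, _, _, _, _, rfl⟩
      unfold gk
      positivity
  have hA0 : (0:ℝ) < (2:ℝ) ^ (2 * κ - 11) := by positivity
  have hG1 : gam (κ - 1) ≤ (2:ℝ) ^ (2 * κ - 11) := by
    have h1 : gam (κ - 1) ≤ 9 * (2:ℝ) ^ (2 * (κ - 1) - 13) := min_le_left _ _
    have h2 : (2:ℝ) ^ (2 * (κ - 1) - 13) = (2:ℝ) ^ (2 * κ - 11) / 16 := by
      rw [show 2 * (κ - 1) - 13 = (2 * κ - 11) - (4:ℕ) by push_cast; ring,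
        Real.rpow_sub (by norm_num), Real.rpow_natCast]
      norm_num
    rw [h2] at h1
    linarith
  have hpow : (2:ℝ) ^ ((M : ℝ) + κ) = 2 ^ M * (2:ℝ) ^ κ := by
    rw [Real.rpow_add (by norm_num), Real.rpow_natCast]
  rw [hpow] at hsum'
  have e1 : ((M : ℝ) + 2) * 2 ^ M * (2 - (2:ℝ) ^ κ) ≤ a 0 := by
    have hs := hsum.sub hsum'
    have hd : HasSum (fun r : ℕ => if r = 0 then (a 0 : ℝ) else 0) (a 0 : ℝ) :=
      hasSum_ite_eq 0 _
    have hle := hasSum_le (fun r => ?_) hs hd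
    · rw [pow_succ] at hle
      linarith
    · rcases r with _ | r
      · simp
      · have : (0:ℝ) ≤ (r:ℝ) * a (r + 1) := by positivity
        simp
        linarith
  have e2 : ((M : ℝ) + 2) * 2 ^ M * (4 - (2:ℝ) ^ κ) ≤ 2 * a 0 + a 1 := by
    have hs := (hsum.mul_left 2).sub hsum'
    have hd : HasSum (fun r : ℕ => (if r = 0 then (2 * a 0 : ℝ) else 0) +
        (if r = 1 then (a 1 : ℝ) else 0)) (2 * a 0 + a 1 : ℝ) :=
      (hasSum_ite_eq 0 _).add (hasSum_ite_eq 1 _)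
    have hle := hasSum_le (fun r => ?_) hs hd
    · rw [pow_succ] at hle
      linarith
    · rcases r with _ | _ | r
      · simp
      · norm_num
        linarith
      · have : (0:ℝ) ≤ (r:ℝ) * a (r + 2) := by positivity
        simp [add_assoc]
        norm_num
        linarith
  generalize gam (κ - 1) = G at *
  generalize (2:ℝ) ^ (2 * κ - 11) = A at *
  have m1 := mul_le_mul_of_nonneg_right e1 (sub_nonneg.2 hG1)
  have m2 := mul_le_mul_of_nonneg_right e2 hG0
  linarith
end
end
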